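/- arXiv:0810.5175 — 2 statements merged into one kernel-verified Lean document; each statement's English description precedes it below -/
import Mathlib

section
/- Logarithmic derivative bound for the loglog weight: let 0 < c ≤ 1 and g(u) := (Real.log (Real.log (10 + u²)))^c. Then g is differentiable on ℝ and |u·g'(u)| ≤ g(u) for every u ∈ ℝ. -/
open MeasureTheory Set

noncomputable section

abbrev Space : Type := EuclideanSpace ℝ (Fin 3)

/-- The loglog weight `g(u) = (log log (10 + u²))^c`. -/
def g (c u : ℝ) : ℝ := Real.log (Real.log (10 + u ^ 2)) ^ c

/-- The nonlinearity `f(u) = u⁵ g(u)`. -/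
def f (c u : ℝ) : ℝ := u ^ 5 * g c u

/-- The potential `F(u) = ∫₀ᵘ f(v) dv`. -/
def Fpot (c u : ℝ) : ℝ := ∫ v in (0:ℝ)..u, f c v

/-- First time derivative `∂ₜ u`. -/
def dt1 (u : ℝ → Space → ℝ) (t : ℝ) (x : Space) : ℝ := deriv (fun s => u s x) t

/-- Second time derivative `∂ₜₜ u`. -/
def dt2 (u : ℝ → Space → ℝ) (t : ℝ) (x : Space) : ℝ := deriv (fun s => dt1 u s x) t

/-- The spatial Laplacian. -/
def lap (h : Space → ℝ) (x : Space) : ℝ :=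
  ∑ i : Fin 3, fderiv ℝ (fun y => fderiv ℝ h y (EuclideanSpace.single i 1)) x
    (EuclideanSpace.single i 1)

/-- A classical solution of `∂ₜₜ u - Δ u = -f(u)` on the time interval `J`:
infinitely differentiable, compactly supported in space for each fixed time,
and satisfying the equation. -/
structure IsClassicalSol (c : ℝ) (J : Set ℝ) (u : ℝ → Space → ℝ) : Prop where
  smooth : ContDiffOn ℝ (⊤ : ℕ∞) (fun p : ℝ × Space => u p.1 p.2) (J ×ˢ (Set.univ : Set Space))
  compactSpt : ∀ t ∈ J, HasCompactSupport (u t)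
  eqn : ∀ t ∈ J, ∀ x : Space, dt2 u t x - lap (u t) x = - f c (u t x)

/-- The conserved energy. -/
def energy (c : ℝ) (u : ℝ → Space → ℝ) (t : ℝ) : ℝ :=
  (1/2) * (∫ x : Space, (dt1 u t x) ^ 2)
    + (1/2) * (∫ x : Space, ‖gradient (u t) x‖ ^ 2)
    + ∫ x : Space, Fpot c (u t x)

/-- Spatial `L^r` norm. -/
def LxNorm (r : ℝ) (h : Space → ℝ) : ℝ := (∫ x : Space, |h x| ^ r) ^ (1 / r)

/-- Mixed norm `L^q_t L^r_x (J × ℝ³)`. -/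
def LtLxNorm (q r : ℝ) (J : Set ℝ) (u : ℝ → Space → ℝ) : ℝ :=
  (∫ t in J, (LxNorm r (u t)) ^ q) ^ (1 / q)

/-- The homogeneous `H̃² = Ḣ² ∩ Ḣ¹` norm. -/
def H2tildeNorm (h : Space → ℝ) : ℝ :=
  (∫ x : Space, ‖iteratedFDeriv ℝ 2 h x‖ ^ 2) ^ ((1:ℝ)/2)
    + (∫ x : Space, ‖gradient h x‖ ^ 2) ^ ((1:ℝ)/2)

/-- The inhomogeneous `H¹` norm. -/
def H1Norm (h : Space → ℝ) : ℝ :=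
  (∫ x : Space, (h x) ^ 2) ^ ((1:ℝ)/2)
    + (∫ x : Space, ‖gradient h x‖ ^ 2) ^ ((1:ℝ)/2)

/-- Spatial `L^r` norm restricted to the interior of the light cone at time `t`,
i.e. the norm of `h · 1_{|x| < t}`. -/
def LxConeNorm (r t : ℝ) (h : Space → ℝ) : ℝ :=
  (∫ x in Metric.ball (0:Space) t, |h x| ^ r) ^ (1 / r)

/-- Mixed norm `L^q_t L^r_x (Γ₊(J))` on the truncated forward light cone. -/
def LtLxConeNorm (q r : ℝ) (J : Set ℝ) (u : ℝ → Space → ℝ) : ℝ :=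
  (∫ t in J, (LxConeNorm r t (u t)) ^ q) ^ (1 / q)

/-- The local energy `e(t)` (integral over the ball `|x| ≤ t`). -/
def locEnergy (c : ℝ) (u : ℝ → Space → ℝ) (t : ℝ) : ℝ :=
  (1/2) * (∫ x in Metric.closedBall (0:Space) t, (dt1 u t x) ^ 2)
    + (1/2) * (∫ x in Metric.closedBall (0:Space) t, ‖gradient (u t) x‖ ^ 2)
    + ∫ x in Metric.closedBall (0:Space) t, Fpot c (u t x)

/-!
Since `log log (a + u²) > 0`, raising to the power `c` multiplies the logarithmic derivative by
`c`, so everything reduces to `u · (log log (a + u²))' ≤ log log (a + u²)`, that is, with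
`L = log (a + u²)`, to `2 u² / (a + u²) ≤ L log L`. The crude bound `2` on the left is too weak near
`u = 0`, where `L log L` is less than `2` for `a = 10`. Instead both sides are compared with a
linear function of `L`: `log x ≥ 1 - 1 / x` bounds the left side by `2 (L - log a)`, and the
tangent line of `L log L` at `L = e` bounds the right side below by `2 L - e`. The two match up
as soon as `2 log a ≥ e`.
-/

section

open Real

theorem logDeriv_rpow_const_of_pos {φ : ℝ → ℝ} {x : ℝ} (hφ : DifferentiableAt ℝ φ x)
    (hx : 0 < φ x) (c : ℝ) : logDeriv (fun y => φ y ^ c) x = c * logDeriv φ x := by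
  have hpow : φ x ^ c ≠ 0 := (rpow_pos_of_pos hx c).ne'
  rw [logDeriv_apply, logDeriv_apply, deriv_rpow_const hφ (Or.inl hx.ne'),
    rpow_sub_one hx.ne']
  field_simp

/-- The Fenchel–Young inequality for the conjugate pair `exp x` and `t log t - t`. -/
theorem mul_add_one_le_mul_log_add_exp {t : ℝ} (ht : 0 ≤ t) (x : ℝ) :
    t * (x + 1) ≤ t * log t + exp x := by
  rcases ht.eq_or_lt with rfl | ht
  · simpa only [zero_mul, zero_add] using (exp_pos x).le
  calc t * (x + 1) = t * log t + t * (x - log t + 1) := by ring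
    _ ≤ t * log t + t * exp (x - log t) := by
      gcongr
      exact add_one_le_exp _
    _ = t * log t + exp x := by
      rw [exp_sub, exp_log ht, mul_div_cancel₀ _ ht.ne']

theorem div_add_le_log_add_sub_log {a s : ℝ} (ha : 0 < a) (has : 0 < a + s) :
    s / (a + s) ≤ log (a + s) - log a :=
  calc s / (a + s) = 1 - ((a + s) / a)⁻¹ := by field_simp; ring
    _ ≤ log ((a + s) / a) := one_sub_inv_le_log_of_pos (div_pos has ha)
    _ = log (a + s) - log a := log_div has.ne' ha.ne'

theorem two_mul_div_add_le_log_mul_log_log {a s : ℝ} (ha : exp (exp 1 / 2) ≤ a)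
    (hs : 0 ≤ s) :
    2 * (s / (a + s)) ≤ log (a + s) * log (log (a + s)) := by
  have ha_pos : 0 < a := (exp_pos _).trans_le ha
  have hlog_a : exp 1 / 2 ≤ log a := (le_log_iff_exp_le ha_pos).2 ha
  have hlog_mono : log a ≤ log (a + s) := log_le_log ha_pos (by linarith)
  have hlog_nonneg : 0 ≤ log (a + s) := by linarith [exp_pos 1]
  have hleft := div_add_le_log_add_sub_log ha_pos (by linarith : 0 < a + s)
  have hright := mul_add_one_le_mul_log_add_exp hlog_nonneg 1
  linarith

theorem hasDerivAt_log_log_add_sq {a : ℝ} (ha : 1 < a) (u : ℝ) :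
    HasDerivAt (fun v => log (log (a + v ^ 2)))
      (2 * u / (a + u ^ 2) / log (a + u ^ 2)) u := by
  have hone : 1 < a + u ^ 2 := by nlinarith
  have hinner : HasDerivAt (fun v : ℝ => a + v ^ 2) (2 * u) u := by
    simpa using (hasDerivAt_pow 2 u).const_add a
  exact (hinner.log (by linarith)).log (log_pos hone).ne'

theorem exp_one_lt_exp_exp_one_div_two : exp 1 < exp (exp 1 / 2) :=
  exp_lt_exp.2 (by linarith [exp_one_gt_two])

theorem log_log_add_sq_pos {a : ℝ} (ha : exp 1 < a) (u : ℝ) :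
    0 < log (log (a + u ^ 2)) := by
  have hexp : exp 1 < a + u ^ 2 := by nlinarith
  exact log_pos ((lt_log_iff_exp_lt ((exp_pos 1).trans hexp)).2 hexp)

theorem abs_mul_logDeriv_log_log_add_sq_le_one {a : ℝ} (ha : exp (exp 1 / 2) ≤ a)
    (u : ℝ) : |u * logDeriv (fun v => log (log (a + v ^ 2))) u| ≤ 1 := by
  have ha_exp : exp 1 < a := exp_one_lt_exp_exp_one_div_two.trans_le ha
  have ha_one : 1 < a := (one_lt_exp_iff.2 one_pos).trans ha_exp
  have hlog : 0 < log (a + u ^ 2) := log_pos (by nlinarith)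
  have hloglog := log_log_add_sq_pos ha_exp u
  have heq : u * logDeriv (fun v => log (log (a + v ^ 2))) u =
      2 * (u ^ 2 / (a + u ^ 2)) / (log (a + u ^ 2) * log (log (a + u ^ 2))) := by
    rw [logDeriv_apply, (hasDerivAt_log_log_add_sq ha_one u).deriv]
    field_simp
  rw [heq, abs_of_nonneg (by positivity), div_le_one (by positivity)]
  exact two_mul_div_add_le_log_mul_log_log ha (sq_nonneg u)

theorem loglog_derivative_bound_general {a : ℝ} (ha : exp (exp 1 / 2) ≤ a) (c : ℝ) :
    Differentiable ℝ (fun u : ℝ => log (log (a + u ^ 2)) ^ c) ∧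
      ∀ u : ℝ, |u * deriv (fun v => log (log (a + v ^ 2)) ^ c) u| ≤
        |c| * log (log (a + u ^ 2)) ^ c := by
  have ha_exp : exp 1 < a := exp_one_lt_exp_exp_one_div_two.trans_le ha
  have ha_one : 1 < a := (one_lt_exp_iff.2 one_pos).trans ha_exp
  have hdiff (u : ℝ) := (hasDerivAt_log_log_add_sq ha_one u).differentiableAt
  have hpos := log_log_add_sq_pos ha_exp
  refine ⟨fun u => (hdiff u).rpow_const (Or.inl (hpos u).ne'), fun u => ?_⟩
  have hpow : 0 < log (log (a + u ^ 2)) ^ c := rpow_pos_of_pos (hpos u) c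
  have hderiv : deriv (fun v => log (log (a + v ^ 2)) ^ c) u =
      c * logDeriv (fun v => log (log (a + v ^ 2))) u * log (log (a + u ^ 2)) ^ c := by
    rw [← logDeriv_rpow_const_of_pos (hdiff u) (hpos u), logDeriv_apply,
      div_mul_cancel₀ _ hpow.ne']
  rw [hderiv, ← mul_assoc, mul_left_comm u c, abs_mul, abs_mul, abs_of_pos hpow]
  gcongr
  exact mul_le_of_le_one_right (abs_nonneg c) (abs_mul_logDeriv_log_log_add_sq_le_one ha u)

theorem exp_exp_one_div_two_le_ten : exp (exp 1 / 2) ≤ 10 :=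
  calc exp (exp 1 / 2) ≤ exp 2 := exp_le_exp.2 (by linarith [exp_one_lt_three])
    _ = exp 1 ^ 2 := (exp_one_pow 2).symm
    _ ≤ 3 ^ 2 := by gcongr; exact exp_one_lt_three.le
    _ ≤ 10 := by norm_num

theorem g_pos (c u : ℝ) : 0 < g c u :=
  rpow_pos_of_pos
    (log_log_add_sq_pos (exp_one_lt_exp_exp_one_div_two.trans_le exp_exp_one_div_two_le_ten) u) c

end

/-- Logarithmic derivative bound for the loglog weight. -/
theorem loglog_derivative_bound (c : ℝ) (hc : 0 < c) (hc1 : c ≤ 1) :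
    Differentiable ℝ (g c) ∧ ∀ u : ℝ, |u * deriv (g c) u| ≤ g c u := by
  obtain ⟨hdiff, hbound⟩ := loglog_derivative_bound_general exp_exp_one_div_two_le_ten c
  exact ⟨hdiff, fun u => (hbound u).trans
    (mul_le_of_le_one_left (g_pos c u).le ((abs_of_pos hc).trans_le hc1))⟩
end
end

section
/- Asymptotics of the nonlinear potential: let 0 < c < 8/225, g(u) := (Real.log (Real.log (10 + u²)))^c, f(u) := u⁵·g(u), F(u) := ∫₀ᵘ f(v) dv. Then for every u ∈ ℝ one has (1/12)·u⁶·g(u) ≤ F(u) ≤ (1/6)·u⁶·g(u). -/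
open MeasureTheory Set

noncomputable section

/-!
Substituting `v = θ u` gives `F(u) = u⁶ ∫₀¹ θ⁵ g(θ u) dθ`. For `θ ∈ [0, 1]` the weight satisfies
`θ ^ (2 c) g(u) ≤ g(θ u) ≤ g(u)`: the upper bound is monotonicity in `|u|`, and the lower bound
holds because `s ↦ log log (10 + s)` is concave and positive at `0`. Integrating against `θ⁵`
gives the constants `1 / (6 + 2 c)` and `1 / 6`.
-/

lemma concaveOn_log_of_pos {E : Type*} [AddCommMonoid E] [Module ℝ E] {s : Set E} {φ : E → ℝ}
    (hφ : ConcaveOn ℝ s φ) (hpos : ∀ x ∈ s, 0 < φ x) :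
    ConcaveOn ℝ s fun x => Real.log (φ x) := by
  refine ⟨hφ.1, fun x hx y hy a b ha hb hab => ?_⟩
  calc a • Real.log (φ x) + b • Real.log (φ y)
      ≤ Real.log (a • φ x + b • φ y) :=
        strictConcaveOn_log_Ioi.concaveOn.2 (hpos x hx) (hpos y hy) ha hb hab
    _ ≤ Real.log (φ (a • x + b • y)) :=
        Real.log_le_log (convex_Ioi (0 : ℝ) (hpos x hx) (hpos y hy) ha hb hab)
          (hφ.2 hx hy ha hb hab)

lemma concaveOn_log_log : ConcaveOn ℝ (Ioi 1) fun x : ℝ => Real.log (Real.log x) :=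
  concaveOn_log_of_pos
    (strictConcaveOn_log_Ioi.concaveOn.subset (Ioi_subset_Ioi zero_le_one) (convex_Ioi 1))
    fun _ hx => Real.log_pos hx

lemma integral_pow_mul_le {h : ℝ → ℝ} {M : ℝ} (n : ℕ)
    (hint : IntervalIntegrable h volume 0 1) (hle : ∀ θ ∈ Icc (0 : ℝ) 1, h θ ≤ M) :
    ∫ θ in (0 : ℝ)..1, θ ^ n * h θ ≤ M / (n + 1) := by
  calc ∫ θ in (0 : ℝ)..1, θ ^ n * h θ
      ≤ ∫ θ in (0 : ℝ)..1, θ ^ n * M :=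
        intervalIntegral.integral_mono_on zero_le_one
          (hint.continuousOn_mul (continuous_pow n).continuousOn)
          ((by fun_prop : Continuous fun θ : ℝ => θ ^ n * M).intervalIntegrable _ _)
          fun θ hθ => mul_le_mul_of_nonneg_left (hle θ hθ) (pow_nonneg hθ.1 n)
    _ = M / (n + 1) := by
        rw [intervalIntegral.integral_mul_const, integral_pow]
        simp [div_eq_inv_mul]

lemma le_integral_pow_mul {h : ℝ → ℝ} {a M : ℝ} (n : ℕ) (ha : 0 ≤ a)
    (hint : IntervalIntegrable h volume 0 1) (hle : ∀ θ ∈ Icc (0 : ℝ) 1, θ ^ a * M ≤ h θ) :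
    M / (n + 1 + a) ≤ ∫ θ in (0 : ℝ)..1, θ ^ n * h θ := by
  have hexp : (n : ℝ) + a + 1 ≠ 0 := by positivity
  calc M / (n + 1 + a)
      = ∫ θ in (0 : ℝ)..1, θ ^ ((n : ℝ) + a) * M := by
        rw [intervalIntegral.integral_mul_const,
          integral_rpow (Or.inl (by linarith [n.cast_nonneg (α := ℝ)])),
          Real.one_rpow, Real.zero_rpow hexp]
        ring
    _ ≤ ∫ θ in (0 : ℝ)..1, θ ^ n * h θ := by
        refine intervalIntegral.integral_mono_on zero_le_one
          (((Real.continuous_rpow_const (by positivity)).mul_const M).intervalIntegrable _ _)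
          (hint.continuousOn_mul (continuous_pow n).continuousOn) fun θ hθ => ?_
        rw [Real.rpow_add_of_nonneg hθ.1 n.cast_nonneg ha, Real.rpow_natCast, mul_assoc]
        exact mul_le_mul_of_nonneg_left (hle θ hθ) (pow_nonneg hθ.1 n)

lemma one_lt_log_ten_add_sq (u : ℝ) : 1 < Real.log (10 + u ^ 2) := by
  rw [Real.lt_log_iff_exp_lt (by positivity)]
  linarith [Real.exp_one_lt_three, sq_nonneg u]

lemma log_log_ten_add_sq_pos (u : ℝ) : 0 < Real.log (Real.log (10 + u ^ 2)) :=
  Real.log_pos (one_lt_log_ten_add_sq u)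

lemma g_nonneg (c u : ℝ) : 0 ≤ g c u :=
  Real.rpow_nonneg (log_log_ten_add_sq_pos u).le c

lemma continuous_g (c : ℝ) : Continuous (g c) := by
  have hlog : Continuous fun u : ℝ => Real.log (10 + u ^ 2) :=
    Continuous.log (by fun_prop) fun u => by positivity
  exact (hlog.log fun u => (zero_lt_one.trans (one_lt_log_ten_add_sq u)).ne').rpow_const
    fun u => Or.inl (log_log_ten_add_sq_pos u).ne'

lemma g_le_g_of_abs_le_abs {c u v : ℝ} (hc : 0 ≤ c) (huv : |u| ≤ |v|) : g c u ≤ g c v := by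
  have hlog : Real.log (10 + u ^ 2) ≤ Real.log (10 + v ^ 2) :=
    Real.log_le_log (by positivity) (by linarith [sq_le_sq.2 huv])
  exact Real.rpow_le_rpow (log_log_ten_add_sq_pos u).le
    (Real.log_le_log (zero_lt_one.trans (one_lt_log_ten_add_sq u)) hlog) hc

lemma sq_mul_log_log_le {θ : ℝ} (hθ : |θ| ≤ 1) (u : ℝ) :
    θ ^ 2 * Real.log (Real.log (10 + u ^ 2)) ≤ Real.log (Real.log (10 + (θ * u) ^ 2)) := by
  have hθ2 : 0 ≤ 1 - θ ^ 2 := sub_nonneg.2 ((sq_le_one_iff_abs_le_one θ).2 hθ)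
  have hten : 0 ≤ Real.log (Real.log 10) := by simpa using (log_log_ten_add_sq_pos 0).le
  calc θ ^ 2 * Real.log (Real.log (10 + u ^ 2))
      ≤ (1 - θ ^ 2) * Real.log (Real.log 10) + θ ^ 2 * Real.log (Real.log (10 + u ^ 2)) :=
        le_add_of_nonneg_left (mul_nonneg hθ2 hten)
    _ ≤ Real.log (Real.log ((1 - θ ^ 2) * 10 + θ ^ 2 * (10 + u ^ 2))) :=
        concaveOn_log_log.2 (mem_Ioi.2 (by norm_num))
          (mem_Ioi.2 (by linarith [sq_nonneg u])) hθ2 (sq_nonneg θ) (sub_add_cancel _ _)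
    _ = Real.log (Real.log (10 + (θ * u) ^ 2)) := by ring_nf

lemma rpow_mul_g_le_g_mul {c θ : ℝ} (hc : 0 ≤ c) (hθ : θ ∈ Icc (0 : ℝ) 1) (u : ℝ) :
    θ ^ (2 * c) * g c u ≤ g c (θ * u) := by
  calc θ ^ (2 * c) * g c u
      = (θ ^ 2 * Real.log (Real.log (10 + u ^ 2))) ^ c := by
        rw [g, Real.mul_rpow (sq_nonneg θ) (log_log_ten_add_sq_pos u).le, Real.rpow_mul hθ.1,
          Real.rpow_two]
    _ ≤ g c (θ * u) :=
        Real.rpow_le_rpow (mul_nonneg (sq_nonneg θ) (log_log_ten_add_sq_pos u).le)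
          (sq_mul_log_log_le (abs_le.2 ⟨by linarith [hθ.1], hθ.2⟩) u) hc

lemma Fpot_eq_pow_mul_integral (c u : ℝ) :
    Fpot c u = u ^ 6 * ∫ θ in (0 : ℝ)..1, θ ^ 5 * g c (θ * u) := by
  calc Fpot c u
      = u * ∫ θ in (0 : ℝ)..1, f c (θ * u) := by
        rw [intervalIntegral.mul_integral_comp_mul_right, zero_mul, one_mul, Fpot]
    _ = u * ∫ θ in (0 : ℝ)..1, u ^ 5 * (θ ^ 5 * g c (θ * u)) := by
        simp only [f, mul_pow, mul_left_comm, mul_assoc]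
    _ = u ^ 6 * ∫ θ in (0 : ℝ)..1, θ ^ 5 * g c (θ * u) := by
        rw [intervalIntegral.integral_const_mul]
        ring

theorem potential_asymptotics_general (c : ℝ) (hc : 0 ≤ c) (u : ℝ) :
    (1 / (6 + 2 * c)) * u ^ 6 * g c u ≤ Fpot c u ∧ Fpot c u ≤ (1/6) * u ^ 6 * g c u := by
  have hint : IntervalIntegrable (fun θ => g c (θ * u)) volume 0 1 :=
    ((continuous_g c).comp (continuous_mul_const u)).intervalIntegrable _ _
  have lower : g c u / (6 + 2 * c) ≤ ∫ θ in (0 : ℝ)..1, θ ^ 5 * g c (θ * u) := by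
    convert le_integral_pow_mul 5 (by positivity) hint
      fun θ hθ => rpow_mul_g_le_g_mul hc hθ u using 2
    norm_num
  have upper : ∫ θ in (0 : ℝ)..1, θ ^ 5 * g c (θ * u) ≤ g c u / 6 := by
    have habs (θ : ℝ) (hθ : θ ∈ Icc (0 : ℝ) 1) : |θ * u| ≤ |u| := by
      rw [abs_mul, abs_of_nonneg hθ.1]
      exact mul_le_of_le_one_left (abs_nonneg u) hθ.2
    convert integral_pow_mul_le 5 hint fun θ hθ => g_le_g_of_abs_le_abs hc (habs θ hθ) using 2
    norm_num
  have hu : 0 ≤ u ^ 6 := by positivity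
  rw [Fpot_eq_pow_mul_integral]
  constructor
  · calc (1 / (6 + 2 * c)) * u ^ 6 * g c u = u ^ 6 * (g c u / (6 + 2 * c)) := by ring
      _ ≤ _ := mul_le_mul_of_nonneg_left lower hu
  · calc _ ≤ u ^ 6 * (g c u / 6) := mul_le_mul_of_nonneg_left upper hu
      _ = (1/6) * u ^ 6 * g c u := by ring

/-- Asymptotics of the nonlinear potential. -/
theorem potential_asymptotics (c : ℝ) (hc : 0 < c) (hc' : c < 8 / 225) (u : ℝ) :
    (1/12) * u ^ 6 * g c u ≤ Fpot c u ∧ Fpot c u ≤ (1/6) * u ^ 6 * g c u := by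
  obtain ⟨lower, upper⟩ := potential_asymptotics_general c hc.le u
  refine ⟨le_trans ?_ lower, upper⟩
  have := g_nonneg c u
  gcongr
  linarith
end
end
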